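/- Let A be a commutative ring and B an A-algebra which is finite and free as an A-module. Let C := B ⊗_A B with multiplication map m : C → B and J := ker m. Then the A-linear map h : B ⊗_A B → Hom_A(B*, B), defined by h(b₁ ⊗ b₂)(f) = f(b₁)·b₂ for f ∈ B* := Hom_A(B,A), is bijective, and it restricts to a bijection from Ann_C(J) onto the subset Hom_B(B*, B) ⊆ Hom_A(B*, B) of B-linear maps (where B* carries the B-module structure (b·f)(y) = f(by) and C acts on B via m). -/

import Mathlib

open scoped TensorProduct

/-- The `A`-linear map `h : B ⊗[A] B → Hom_A(B*, B)`, `h (b₁ ⊗ b₂) f = f b₁ • b₂`. -/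
noncomputable def tensorToHomDual (A B : Type*) [CommRing A] [CommRing B] [Algebra A B] :
    B ⊗[A] B →ₗ[A] ((B →ₗ[A] A) →ₗ[A] B) :=
  (dualTensorHom A (Module.Dual A B) B).comp
    (TensorProduct.map (Module.Dual.eval A B) LinearMap.id)

/-!
For `B` finite projective, `h` is the reflexivity isomorphism `B ≅ B**` tensored with `B`, followed
by the isomorphism `B** ⊗ B ≅ Hom_A(B*, B)`. The ideal `J` is generated by the elements
`1 ⊗ b - b ⊗ 1`, so `x` annihilates `J` if and only if `x * (b ⊗ 1) = x * (1 ⊗ b)` for all `b`.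
Under `h`, multiplication by `b ⊗ 1` becomes precomposition with the action of `b` on `B*`, and
multiplication by `1 ⊗ b` becomes multiplication by `b` on the target. Hence `B`-linearity of `h x`
says that `h` agrees on the two products, and injectivity of `h` gives the equivalence.
-/

section

variable {A B : Type*} [CommRing A] [CommRing B] [Algebra A B]

@[simp]
theorem tensorToHomDual_tmul_apply (b c : B) (f : B →ₗ[A] A) :
    tensorToHomDual A B (b ⊗ₜ[A] c) f = f b • c := by
  simp [tensorToHomDual]

theorem tensorToHomDual_mul_tmul_one_apply (x : B ⊗[A] B) (b : B) (f : B →ₗ[A] A) :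
    tensorToHomDual A B (x * (b ⊗ₜ[A] 1)) f =
      tensorToHomDual A B x (f ∘ₗ LinearMap.mul A B b) := by
  induction x with
  | zero => simp
  | add x y hx hy => simp only [add_mul, map_add, LinearMap.add_apply, hx, hy]
  | tmul u v => simp [mul_comm]

theorem tensorToHomDual_mul_one_tmul_apply (x : B ⊗[A] B) (b : B) (f : B →ₗ[A] A) :
    tensorToHomDual A B (x * (1 ⊗ₜ[A] b)) f = b * tensorToHomDual A B x f := by
  induction x with
  | zero => simp
  | add x y hx hy => simp only [add_mul, mul_add, map_add, LinearMap.add_apply, hx, hy]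
  | tmul u v => simp [mul_comm]

theorem tensorToHomDual_bijective [Module.Finite A B] [Module.Projective A B] :
    Function.Bijective (tensorToHomDual A B) :=
  dualTensorHom_bijective.comp
    (TensorProduct.congr (Module.evalEquiv A B) (LinearEquiv.refl A B)).bijective

theorem mem_annihilator_kaehlerDifferential_ideal_iff {x : B ⊗[A] B} :
    x ∈ (KaehlerDifferential.ideal A B).annihilator ↔
      ∀ b : B, x * (b ⊗ₜ[A] 1) = x * (1 ⊗ₜ[A] b) := by
  simp only [← KaehlerDifferential.span_range_eq_ideal, Ideal.span, Submodule.mem_annihilator_span,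
    Subtype.forall, Set.forall_mem_range, smul_eq_mul, mul_sub, sub_eq_zero]
  exact forall_congr' fun _ ↦ eq_comm

theorem mem_annihilator_kaehlerDifferential_ideal_iff_linear_of_injective
    (h_inj : Function.Injective (tensorToHomDual A B)) {x : B ⊗[A] B} :
    x ∈ (KaehlerDifferential.ideal A B).annihilator ↔
      ∀ (b : B) (f : B →ₗ[A] A),
        tensorToHomDual A B x (f ∘ₗ LinearMap.mul A B b) = b * tensorToHomDual A B x f := by
  simp only [mem_annihilator_kaehlerDifferential_ideal_iff, ← h_inj.eq_iff, LinearMap.ext_iff,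
    tensorToHomDual_mul_tmul_one_apply, tensorToHomDual_mul_one_tmul_apply]

theorem tensorToHomDual_bijective_and_ann_iff_B_linear_general
    [Module.Finite A B] [Module.Projective A B] :
    Function.Bijective (tensorToHomDual A B) ∧
    ∀ x : B ⊗[A] B,
      ((∀ j ∈ RingHom.ker (Algebra.TensorProduct.lmul' A : B ⊗[A] B →ₐ[A] B), x * j = 0) ↔
        (∀ (b : B) (f : B →ₗ[A] A),
          tensorToHomDual A B x (f.comp (LinearMap.mul A B b)) =
            b * tensorToHomDual A B x f)) :=
  ⟨tensorToHomDual_bijective, fun _ ↦ Submodule.mem_annihilator.symm.trans <|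
    mem_annihilator_kaehlerDifferential_ideal_iff_linear_of_injective
      tensorToHomDual_bijective.injective⟩

end

/-- Let `A` be a commutative ring and `B` an `A`-algebra which is finite and
free as an `A`-module.  Let `C := B ⊗[A] B`, `m : C → B` the multiplication map and
`J := ker m`.  Then the map `h : B ⊗[A] B → Hom_A(B*, B)`, `h (b₁ ⊗ b₂) f = f b₁ • b₂`, is
bijective, and it restricts to a bijection from `Ann_C J` onto the subset
`Hom_B(B*, B) ⊆ Hom_A(B*, B)` of `B`-linear maps, `B* = Hom_A(B, A)` carrying the `B`-module
structure `(b · f) y = f (b * y)`. -/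
theorem tensorToHomDual_bijective_and_ann_iff_B_linear
    {A B : Type*} [CommRing A] [CommRing B] [Algebra A B]
    [Module.Finite A B] [Module.Free A B] :
    Function.Bijective (tensorToHomDual A B) ∧
    ∀ x : B ⊗[A] B,
      ((∀ j ∈ RingHom.ker (Algebra.TensorProduct.lmul' A : B ⊗[A] B →ₐ[A] B), x * j = 0) ↔
        (∀ (b : B) (f : B →ₗ[A] A),
          tensorToHomDual A B x (f.comp (LinearMap.mul A B b)) =
            b * tensorToHomDual A B x f)) :=
  tensorToHomDual_bijective_and_ann_iff_B_linear_general
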